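/- Let 0 < γ < 1 and ν ≥ 3/2. Then for all x > 0, ∫_0^x e^{−γt} t^ν I_ν(t) dt > (1/(1−γ)) · ( 1 − 4ν² / ((2ν−1)(1−γ)x) ) · e^{−γx} x^ν I_ν(x). -/

import Mathlib

open Real MeasureTheory

/-- Modified Bessel function of the first kind, `I_ν(x) = ∑_{k} (x/2)^{ν+2k} / (Γ(ν+k+1) k!)`. -/
noncomputable def besselI (ν x : ℝ) : ℝ :=
  ∑' k : ℕ, (x / 2) ^ (ν + 2 * (k : ℝ)) / (Real.Gamma (ν + (k : ℝ) + 1) * (Nat.factorial k : ℝ))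

/-- Modified Bessel function of the second kind, `K_ν(x) = ∫_0^∞ e^{-x cosh t} cosh(ν t) dt`. -/
noncomputable def besselK (ν x : ℝ) : ℝ :=
  ∫ t in Set.Ioi (0 : ℝ), Real.exp (-x * Real.cosh t) * Real.cosh (ν * t)

/-- Lower incomplete gamma function `γ(a, x) = ∫_0^x t^{a-1} e^{-t} dt`. -/
noncomputable def lowerIncGamma (a x : ℝ) : ℝ :=
  ∫ t in (0 : ℝ)..x, t ^ (a - 1) * Real.exp (-t)

/-!
Write `f t = e^{-γt} t^ν I_ν(t)`. From `I_ν' = I_{ν+1} + (ν/t) I_ν` and `I_{ν+1} ≤ I_ν` one gets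
`f' ≤ (1 - γ + 2ν/t) f`. With `c = 2ν/(1-γ)`, the terms of order `1/t` then cancel in the derivative
of `(1 - c/t) f`, which is at most `(1 - γ) f` because `2ν ≥ 1`. Integrating from `c`, where
`1 - c/t` vanishes, to `x` gives the inequality with the constant `2ν`, which is smaller than
`4ν²/(2ν-1)`; for `x ≤ c` the lower bound is not positive.
-/

section BesselSeries

/-- The power series coefficient `1 / (Γ(ν+k+1) k!)` of `besselSeries`. Since `Real.Gamma` is `0` at
its poles and `1 / 0 = 0`, the convention `1 / Γ(-n) = 0` holds and `ν` may be any real number. -/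
noncomputable def besselCoeff (ν : ℝ) (k : ℕ) : ℝ :=
  1 / (Real.Gamma (ν + k + 1) * k.factorial)

/-- The regularized hypergeometric function `₀F₁(; ν+1; y) / Γ(ν+1)`, which is entire in `y`. It is
the factor of `I_ν(x)` left after `(x/2)^ν`, with `y = (x/2)²`. -/
noncomputable def besselSeries (ν y : ℝ) : ℝ :=
  ∑' k : ℕ, besselCoeff ν k * y ^ k

variable {ν : ℝ}

lemma besselCoeff_pos (hν : -1 < ν) (k : ℕ) : 0 < besselCoeff ν k := by
  have hΓ : 0 < Real.Gamma (ν + k + 1) :=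
    Real.Gamma_pos_of_pos (by linarith [k.cast_nonneg (α := ℝ)])
  unfold besselCoeff
  positivity

lemma besselCoeff_add_one_left (ν : ℝ) (k : ℕ) :
    besselCoeff (ν + 1) k = (k + 1) * besselCoeff ν (k + 1) := by
  have hk : (k + 1 : ℝ) ≠ 0 := by positivity
  have hΓ : ν + 1 + k + 1 = ν + (k + 1 : ℕ) + 1 := by push_cast; ring
  rw [besselCoeff, besselCoeff, hΓ, Nat.factorial_succ]
  push_cast
  field_simp

lemma besselCoeff_eq_mul_succ (ν : ℝ) (k : ℕ) :
    besselCoeff ν k = (ν + k + 1) * ((k + 1) * besselCoeff ν (k + 1)) := by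
  rw [← besselCoeff_add_one_left, besselCoeff, besselCoeff]
  rcases eq_or_ne (ν + k + 1) 0 with hpole | hne
  · simp [hpole]
  · have hΓ : Real.Gamma (ν + 1 + k + 1) = (ν + k + 1) * Real.Gamma (ν + k + 1) := by
      rw [← Real.Gamma_add_one hne]
      ring_nf
    rw [hΓ]
    field_simp

lemma summable_besselCoeff_mul_pow (ν y : ℝ) : Summable fun k : ℕ ↦ besselCoeff ν k * y ^ k := by
  have hradius : (Complex.regularizedHGFunSeries 0 {(ν : ℂ) + 1}).radius = ⊤ :=
    Complex.radius_regularizedHGFunSeries_eq_top (by simp)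
  have hsum := (Complex.regularizedHGFunSeries 0 {(ν : ℂ) + 1}).summable (x := y)
    (by simp [hradius])
  refine Complex.summable_ofReal.mp (hsum.congr fun k ↦ ?_)
  have hΓ : Complex.Gamma (ν + 1 + k) = Real.Gamma (ν + k + 1) := by
    rw [← Complex.Gamma_ofReal]
    push_cast
    ring_nf
  rw [FormalMultilinearSeries.apply_eq_pow_smul_coeff, Complex.regularizedHGFunSeries_coeff]
  simp [Complex.regularizedHGFunCoeff, besselCoeff, hΓ, mul_comm]

lemma hasDerivAt_besselSeries (ν y : ℝ) :
    HasDerivAt (besselSeries ν) (besselSeries (ν + 1) y) y := by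
  set R : ℝ := |y| + 1
  have hterm_succ (k : ℕ) (z : ℝ) :
      besselCoeff ν (k + 1) * ((k + 1 : ℕ) * z ^ (k + 1 - 1)) = besselCoeff (ν + 1) k * z ^ k := by
    rw [besselCoeff_add_one_left, add_tsub_cancel_right]
    push_cast
    ring
  have hbound : Summable fun k : ℕ ↦ ‖besselCoeff ν k * (k * R ^ (k - 1))‖ := by
    rw [← summable_nat_add_iff 1]
    simpa only [hterm_succ] using (summable_besselCoeff_mul_pow (ν + 1) R).norm
  have hle (k : ℕ) (z : ℝ) (hz : z ∈ Metric.ball (0 : ℝ) R) :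
      ‖besselCoeff ν k * (k * z ^ (k - 1))‖ ≤ ‖besselCoeff ν k * (k * R ^ (k - 1))‖ := by
    have hzR : ‖z‖ ≤ ‖R‖ := (mem_ball_zero_iff.mp hz).le.trans (le_abs_self R)
    simp only [norm_mul, norm_pow]
    gcongr
  have hy : y ∈ Metric.ball (0 : ℝ) R := by simp [R]
  have hderiv := hasDerivAt_tsum_of_isPreconnected hbound Metric.isOpen_ball
    (convex_ball _ _).isPreconnected (fun k z _ ↦ (hasDerivAt_pow k z).const_mul (besselCoeff ν k))
    hle hy (summable_besselCoeff_mul_pow ν y) hy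
  refine hderiv.congr_deriv ?_
  have hsum : Summable fun k : ℕ ↦ besselCoeff ν k * (k * y ^ (k - 1)) := by
    rw [← summable_nat_add_iff 1]
    simpa only [hterm_succ] using summable_besselCoeff_mul_pow (ν + 1) y
  rw [hsum.tsum_eq_zero_add]
  simp only [hterm_succ, Nat.cast_zero, zero_mul, mul_zero, zero_add, besselSeries]

lemma continuous_besselSeries (ν : ℝ) : Continuous (besselSeries ν) :=
  continuous_iff_continuousAt.mpr fun y ↦ (hasDerivAt_besselSeries ν y).continuousAt

lemma besselSeries_pos (hν : -1 < ν) {y : ℝ} (hy : 0 ≤ y) : 0 < besselSeries ν y :=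
  (summable_besselCoeff_mul_pow ν y).tsum_pos
    (fun k ↦ mul_nonneg (besselCoeff_pos hν k).le (pow_nonneg hy k)) 0
    (by simpa using besselCoeff_pos hν 0)

-- AM-GM bounds `(k + 1) s` by half of `(k + 1)² + s²`, hence each term on the left by the mean of
-- two consecutive terms on the right.
lemma mul_besselSeries_add_one_le (hν : 0 ≤ ν) (s : ℝ) :
    s * besselSeries (ν + 1) (s ^ 2) ≤ besselSeries ν (s ^ 2) := by
  have hν' : -1 < ν := by linarith
  set u : ℕ → ℝ := fun k ↦ besselCoeff ν k * (s ^ 2) ^ k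
  have hu : Summable u := summable_besselCoeff_mul_pow ν (s ^ 2)
  have hu_succ : Summable fun k ↦ u (k + 1) := (summable_nat_add_iff 1).mpr hu
  have hterm (k : ℕ) :
      s * (besselCoeff (ν + 1) k * (s ^ 2) ^ k) ≤ 1 / 2 * (u k + u (k + 1)) := by
    have hamgm : s * (k + 1) ≤ 1 / 2 * ((ν + k + 1) * (k + 1) + s ^ 2) := by
      nlinarith [sq_nonneg (s - (k + 1)), (by positivity : 0 ≤ ν * (k + 1))]
    have hweight : 0 ≤ besselCoeff ν (k + 1) * (s ^ 2) ^ k :=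
      mul_nonneg (besselCoeff_pos hν' _).le (by positivity)
    calc s * (besselCoeff (ν + 1) k * (s ^ 2) ^ k)
        = s * (k + 1) * (besselCoeff ν (k + 1) * (s ^ 2) ^ k) := by
          rw [besselCoeff_add_one_left]; ring
      _ ≤ 1 / 2 * ((ν + k + 1) * (k + 1) + s ^ 2) * (besselCoeff ν (k + 1) * (s ^ 2) ^ k) :=
          mul_le_mul_of_nonneg_right hamgm hweight
      _ = 1 / 2 * (u k + u (k + 1)) := by
          simp only [u, besselCoeff_eq_mul_succ ν k]; ring
  have hu_zero : 0 < u 0 := by simpa [u] using besselCoeff_pos hν' 0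
  calc s * besselSeries (ν + 1) (s ^ 2)
      = ∑' k : ℕ, s * (besselCoeff (ν + 1) k * (s ^ 2) ^ k) := tsum_mul_left.symm
    _ ≤ ∑' k : ℕ, 1 / 2 * (u k + u (k + 1)) :=
        ((summable_besselCoeff_mul_pow (ν + 1) (s ^ 2)).mul_left s).tsum_le_tsum hterm
          ((hu.add hu_succ).mul_left _)
    _ = 1 / 2 * (∑' k, u k + ∑' k, u (k + 1)) := by rw [tsum_mul_left, hu.tsum_add hu_succ]
    _ ≤ ∑' k, u k := by linarith [hu.tsum_eq_zero_add]

end BesselSeries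

section BesselI

variable {ν x : ℝ}

lemma besselI_eq_rpow_mul_besselSeries (ν : ℝ) (hx : 0 < x) :
    besselI ν x = (x / 2) ^ ν * besselSeries ν ((x / 2) ^ 2) := by
  rw [besselI, besselSeries, ← tsum_mul_left]
  refine tsum_congr fun k ↦ ?_
  have hpow : (x / 2) ^ (ν + 2 * (k : ℝ)) = (x / 2) ^ ν * ((x / 2) ^ 2) ^ k := by
    rw [← pow_mul, ← Real.rpow_add_natCast (by positivity)]
    push_cast
    rfl
  rw [hpow, besselCoeff]
  ring

lemma besselI_pos (hν : -1 < ν) (hx : 0 < x) : 0 < besselI ν x := by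
  have hseries := besselSeries_pos hν (sq_nonneg (x / 2))
  rw [besselI_eq_rpow_mul_besselSeries ν hx]
  positivity

lemma besselI_add_one_le (hν : 0 ≤ ν) (hx : 0 < x) : besselI (ν + 1) x ≤ besselI ν x := by
  rw [besselI_eq_rpow_mul_besselSeries _ hx, besselI_eq_rpow_mul_besselSeries _ hx,
    Real.rpow_add_one (by positivity), mul_assoc]
  gcongr
  exact mul_besselSeries_add_one_le hν (x / 2)

lemma hasDerivAt_besselI (ν : ℝ) (hx : 0 < x) :
    HasDerivAt (besselI ν) (besselI (ν + 1) x + ν / x * besselI ν x) x := by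
  have hhalf : HasDerivAt (fun t : ℝ ↦ t / 2) (1 / 2) x := (hasDerivAt_id x).div_const 2
  have hpow := hhalf.rpow_const (p := ν) (Or.inl (by positivity))
  have hseries := (hasDerivAt_besselSeries ν ((x / 2) ^ 2)).comp x (hhalf.pow 2)
  have hprod := (hpow.mul hseries).congr_of_eventuallyEq <|
    (eventually_gt_nhds hx).mono fun t ht ↦ besselI_eq_rpow_mul_besselSeries ν ht
  refine hprod.congr_deriv ?_
  rw [besselI_eq_rpow_mul_besselSeries _ hx, besselI_eq_rpow_mul_besselSeries _ hx,
    Real.rpow_add_one (by positivity), Real.rpow_sub_one (by positivity)]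
  simp only [Function.comp_apply, Pi.pow_apply]
  field_simp
  ring

lemma hasDerivAt_exp_mul_rpow_mul_besselI (γ ν : ℝ) (hx : 0 < x) :
    HasDerivAt (fun t ↦ Real.exp (-γ * t) * t ^ ν * besselI ν t)
      (Real.exp (-γ * x) * x ^ ν * (besselI (ν + 1) x + (2 * ν / x - γ) * besselI ν x)) x := by
  have hexp : HasDerivAt (fun t ↦ Real.exp (-γ * t)) (Real.exp (-γ * x) * -γ) x := by
    simpa using ((hasDerivAt_id x).const_mul (-γ)).exp
  have hpow : HasDerivAt (fun t ↦ t ^ ν) (ν * x ^ (ν - 1)) x :=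
    Real.hasDerivAt_rpow_const (Or.inl hx.ne')
  refine ((hexp.mul hpow).mul (hasDerivAt_besselI ν hx)).congr_deriv ?_
  rw [Real.rpow_sub_one hx.ne', Pi.mul_apply]
  field_simp
  ring

lemma intervalIntegrable_exp_mul_rpow_mul_besselI (γ : ℝ) (hν : -1 < 2 * ν) (hx : 0 ≤ x) :
    IntervalIntegrable (fun t ↦ Real.exp (-γ * t) * t ^ ν * besselI ν t) volume 0 x := by
  have hcont : Continuous fun t : ℝ ↦
      Real.exp (-γ * t) * (2 ^ ν)⁻¹ * besselSeries ν ((t / 2) ^ 2) := by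
    have := continuous_besselSeries ν
    fun_prop
  refine ((intervalIntegral.intervalIntegrable_rpow' hν).mul_continuousOn
    hcont.continuousOn).congr fun t ht ↦ ?_
  have ht : 0 < t := (Set.uIoc_of_le hx ▸ ht).1
  have hpow : t ^ (2 * ν) = t ^ ν * t ^ ν := by rw [two_mul, Real.rpow_add ht]
  rw [besselI_eq_rpow_mul_besselSeries ν ht, hpow, Real.div_rpow ht.le zero_le_two]
  ring

end BesselI

section IntegralComparison

variable {f f' : ℝ → ℝ} {a b x : ℝ}

-- The constant `b / a` is the one for which the terms in `1 / t` cancel.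
lemma deriv_one_sub_div_mul_le {t y y' : ℝ} (ha : 0 < a) (hb : 1 ≤ b) (ht : 0 < t)
    (hbt : b / a ≤ t) (hy : 0 ≤ y) (hy' : y' ≤ (a + b / t) * y) :
    b / a / t ^ 2 * y + (1 - b / a / t) * y' ≤ a * y := by
  have hfactor : 0 ≤ 1 - b / a / t := sub_nonneg.mpr ((div_le_one ht).mpr hbt)
  have hremainder : 0 ≤ b / a * (b - 1) / t ^ 2 * y := by
    have := sub_nonneg.mpr hb
    positivity
  calc b / a / t ^ 2 * y + (1 - b / a / t) * y'
      ≤ b / a / t ^ 2 * y + (1 - b / a / t) * ((a + b / t) * y) := by gcongr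
    _ = a * y - b / a * (b - 1) / t ^ 2 * y := by field_simp; ring
    _ ≤ a * y := sub_le_self _ hremainder

lemma one_sub_div_mul_le_mul_integral (ha : 0 < a) (hb : 1 ≤ b) (hbx : b / a ≤ x)
    (hint : IntervalIntegrable f volume (b / a) x) (hpos : ∀ t ∈ Set.Icc (b / a) x, 0 ≤ f t)
    (hderiv : ∀ t ∈ Set.Icc (b / a) x, HasDerivAt f (f' t) t)
    (hle : ∀ t ∈ Set.Icc (b / a) x, f' t ≤ (a + b / t) * f t) :
    (1 - b / a / x) * f x ≤ a * ∫ t in (b / a)..x, f t := by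
  have hc : 0 < b / a := by positivity
  have hderiv_mul (t : ℝ) (ht : t ∈ Set.Icc (b / a) x) :
      HasDerivAt (fun t ↦ (1 - b / a / t) * f t)
        (b / a / t ^ 2 * f t + (1 - b / a / t) * f' t) t := by
    have hfactor : HasDerivAt (fun t ↦ 1 - b / a / t) (b / a / t ^ 2) t := by
      simpa [div_eq_mul_inv] using
        ((hasDerivAt_inv (hc.trans_le ht.1).ne').const_mul (b / a)).const_sub 1
    exact hfactor.mul (hderiv t ht)
  have hsub := intervalIntegral.sub_le_integral_of_hasDeriv_right_of_le hbx
    (fun t ht ↦ (hderiv_mul t ht).continuousAt.continuousWithinAt)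
    (fun t ht ↦ (hderiv_mul t (Set.Ioo_subset_Icc_self ht)).hasDerivWithinAt)
    ((intervalIntegrable_iff_integrableOn_Icc_of_le hbx).mp (hint.const_mul a)) fun t ht ↦
      have ht := Set.Ioo_subset_Icc_self ht
      deriv_one_sub_div_mul_le ha hb (hc.trans_le ht.1) ht.1 (hpos t ht) (hle t ht)
  rwa [div_self hc.ne', sub_self, zero_mul, sub_zero, intervalIntegral.integral_const_mul] at hsub

theorem one_sub_div_mul_lt_mul_integral (ha : 0 < a) (hb : 1 ≤ b) (hx : 0 < x)
    (hint : IntervalIntegrable f volume 0 x) (hpos : ∀ t ∈ Set.Ioc 0 x, 0 < f t)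
    (hderiv : ∀ t ∈ Set.Ioc 0 x, HasDerivAt f (f' t) t)
    (hle : ∀ t ∈ Set.Ioc 0 x, f' t ≤ (a + b / t) * f t) :
    (1 - b / a / x) * f x < a * ∫ t in (0 : ℝ)..x, f t := by
  have hc : 0 < b / a := by positivity
  have hintegral_pos {y : ℝ} (hy : 0 < y) (hyx : y ≤ x) : 0 < ∫ t in (0 : ℝ)..y, f t :=
    intervalIntegral.intervalIntegral_pos_of_pos_on
      (hint.mono_set (Set.uIcc_subset_uIcc_left (Set.mem_uIcc_of_le hy.le hyx)))
      (fun t ht ↦ hpos t ⟨ht.1, ht.2.le.trans hyx⟩) hy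
  rcases le_total x (b / a) with hxc | hcx
  · have hfactor : 1 - b / a / x ≤ 0 := sub_nonpos.mpr ((one_le_div hx).mpr hxc)
    exact (mul_nonpos_of_nonpos_of_nonneg hfactor (hpos x ⟨hx, le_rfl⟩).le).trans_lt
      (mul_pos ha (hintegral_pos hx le_rfl))
  · have hsub : Set.Icc (b / a) x ⊆ Set.Ioc 0 x := fun t ht ↦ ⟨hc.trans_le ht.1, ht.2⟩
    have hmem : b / a ∈ Set.uIcc 0 x := Set.mem_uIcc_of_le hc.le hcx
    have hint_left := hint.mono_set (Set.uIcc_subset_uIcc_left hmem)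
    have hint_right := hint.mono_set (Set.uIcc_subset_uIcc_right hmem)
    calc (1 - b / a / x) * f x
        ≤ a * ∫ t in (b / a)..x, f t :=
          one_sub_div_mul_le_mul_integral ha hb hcx hint_right (fun t ht ↦ (hpos t (hsub ht)).le)
            (fun t ht ↦ hderiv t (hsub ht)) (fun t ht ↦ hle t (hsub ht))
      _ < a * ((∫ t in (0 : ℝ)..b / a, f t) + ∫ t in (b / a)..x, f t) :=
          mul_lt_mul_of_pos_left (lt_add_of_pos_left _ (hintegral_pos hc hcx)) ha
      _ = a * ∫ t in (0 : ℝ)..x, f t := by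
          rw [intervalIntegral.integral_add_adjacent_intervals hint_left hint_right]

end IntegralComparison

theorem stmt_2_general {γ ν x : ℝ} (hγ : γ < 1) (hν : 1 / 2 ≤ ν) (hx : 0 < x) :
    1 / (1 - γ) * (1 - 2 * ν / ((1 - γ) * x)) * (Real.exp (-γ * x) * x ^ ν * besselI ν x) <
      ∫ t in (0 : ℝ)..x, Real.exp (-γ * t) * t ^ ν * besselI ν t := by
  have hγ' : 0 < 1 - γ := sub_pos.mpr hγ
  have hlt := one_sub_div_mul_lt_mul_integral hγ' (b := 2 * ν) (by linarith) hx
    (intervalIntegrable_exp_mul_rpow_mul_besselI γ (by linarith) hx.le)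
    (fun t ⟨ht, _⟩ ↦ mul_pos (by positivity) (besselI_pos (by linarith) ht))
    (fun t ⟨ht, _⟩ ↦ hasDerivAt_exp_mul_rpow_mul_besselI γ ν ht) fun t ⟨ht, _⟩ ↦ by
      have hI : besselI (ν + 1) t ≤ besselI ν t := besselI_add_one_le (by linarith) ht
      calc _ ≤ Real.exp (-γ * t) * t ^ ν * (besselI ν t + (2 * ν / t - γ) * besselI ν t) := by
            gcongr
        _ = (1 - γ + 2 * ν / t) * (Real.exp (-γ * t) * t ^ ν * besselI ν t) := by ring
  rwa [mul_assoc, one_div, inv_mul_lt_iff₀ hγ', ← div_div]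

lemma two_mul_div_le_four_mul_sq_div {ν r : ℝ} (hν : 1 / 2 < ν) (hr : 0 ≤ r) :
    2 * ν / r ≤ 4 * ν ^ 2 / ((2 * ν - 1) * r) := by
  have hden : 0 < 2 * ν - 1 := by linarith
  rw [← div_div]
  gcongr
  rw [le_div_iff₀ hden]
  nlinarith

theorem stmt_2 (γ ν : ℝ) (hγ0 : 0 < γ) (hγ1 : γ < 1) (hν : 3/2 ≤ ν) (x : ℝ) (hx : 0 < x) :
    ∫ t in (0 : ℝ)..x, Real.exp (-γ * t) * t ^ ν * besselI ν t >
      (1 / (1 - γ)) * (1 - 4 * ν ^ 2 / ((2 * ν - 1) * (1 - γ) * x)) *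
        (Real.exp (-γ * x) * x ^ ν * besselI ν x) := by
  refine lt_of_le_of_lt ?_ (stmt_2_general hγ1 (by linarith) hx)
  have hI := besselI_pos (by linarith : -1 < ν) hx
  have : 0 < 1 - γ := sub_pos.mpr hγ1
  rw [mul_assoc (2 * ν - 1)]
  gcongr 1 / (1 - γ) * (1 - ?_) * _
  exact two_mul_div_le_four_mul_sq_div (by linarith) (by positivity)
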